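/- For S ∈ B(H), S belongs to D+K if and only if the commutator [S, D] is compact for every diagonal operator D. -/

import Mathlib

open scoped InnerProductSpace
open ContinuousLinearMap

variable {H : Type*} [NormedAddCommGroup H] [InnerProductSpace ℂ H] [CompleteSpace H]

/-- An operator is diagonal with respect to the fixed orthonormal (Hilbert) basis `e`. -/
def IsDiagonal (e : HilbertBasis ℕ ℂ H) (T : H →L[ℂ] H) : Prop :=
  ∀ n m : ℕ, n ≠ m → ⟪e m, T (e n)⟫_ℂ = 0

/-- The set `D + K` of sums of a diagonal operator and a compact operator. -/
def DplusK (e : HilbertBasis ℕ ℂ H) : Set (H →L[ℂ] H) :=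
  {T | ∃ D K : H →L[ℂ] H, IsDiagonal e D ∧ IsCompactOperator ⇑K ∧ T = D + K}

/-!
The forward direction holds because diagonal operators commute and the compact operators form an
ideal. For the converse, subtract from `S` its diagonal part: what remains is an operator `T` with
zero diagonal whose commutator with every diagonal operator is compact, and the claim is that `T`
is compact.

For `ε : ℕ → Bool` let `D ε` be the diagonal operator with entries `±1` given by `ε`. Each
`[T, D ε]` is compact, hence for fixed `η > 0` its form is at most `η` on vectors `y` with
sufficiently many vanishing coordinates (`exists_tail_bound_of_isCompact`). The set of `ε` for
which the first `n` coordinates suffice is closed, because `D ε` depends weakly continuously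
on `ε`, so by Baire's theorem on the Cantor space one `n` works for all `ε` in a cylinder
(`exists_cylinder_bound`). The signs away from a finite set `J` are then free. Since `T` has zero
diagonal, the average of `D ε * T * D ε` over these signs vanishes on vectors supported off `J`,
so `T` is an average of the operators `T - D ε * T * D ε = [T, D ε] * D ε` there, and its form is
at most `η` off `J` (`norm_inner_le_of_cylinder_bound`, `exists_finset_bound`). Thus `T` is within
`η` of a finite-rank operator, for every `η > 0`.
-/

set_option linter.unusedSectionVars false

theorem HilbertBasis.ext_coord (e : HilbertBasis ℕ ℂ H) {x y : H}
    (h : ∀ i, ⟪e i, x⟫_ℂ = ⟪e i, y⟫_ℂ) : x = y := by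
  apply e.repr.injective
  ext i
  simpa only [e.repr_apply_apply] using h i

/-- Multiplication of coordinates by a bounded sequence is a bounded operator. -/
theorem exists_diagonal_of_bounded (e : HilbertBasis ℕ ℂ H) (a : ℕ → ℂ) (C : ℝ)
    (ha : ∀ i, ‖a i‖ ≤ C) :
    ∃ D : H →L[ℂ] H, (∀ i x, ⟪e i, D x⟫_ℂ = a i * ⟪e i, x⟫_ℂ) ∧ ‖D‖ ≤ C := by
  have hC : 0 ≤ C := (norm_nonneg _).trans (ha 0)
  have hle : ∀ (f : lp (fun _ : ℕ => ℂ) 2) i, ‖a i * f i‖ ≤ ‖((C : ℂ) • f) i‖ := by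
    intro f i
    rw [lp.coeFn_smul, Pi.smul_apply, norm_smul, norm_mul, Complex.norm_real, Real.norm_of_nonneg hC]
    gcongr
    exact ha i
  have hmem : ∀ f : lp (fun _ : ℕ => ℂ) 2, Memℓp (fun i => a i * f i) 2 := fun f =>
    (lp.memℓp ((C : ℂ) • f)).mono' (hle f)
  let L : lp (fun _ : ℕ => ℂ) 2 →ₗ[ℂ] lp (fun _ : ℕ => ℂ) 2 :=
    { toFun := fun f => ⟨fun i => a i * f i, hmem f⟩
      map_add' := fun f g => by ext i; exact mul_add (a i) (f i) (g i)
      map_smul' := fun c f => by ext i; exact mul_left_comm (a i) c (f i) }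
  have hL : ∀ f, ‖L f‖ ≤ C * ‖f‖ := by
    intro f
    have := lp.norm_mono (p := 2) (by norm_num) (x := L f) (y := (C : ℂ) • f) (hle f)
    rwa [norm_smul, Complex.norm_real, Real.norm_of_nonneg hC] at this
  let M : H →ₗ[ℂ] H :=
    e.repr.symm.toLinearEquiv.toLinearMap ∘ₗ L ∘ₗ e.repr.toLinearEquiv.toLinearMap
  have hM : ∀ x, ‖M x‖ ≤ C * ‖x‖ := by
    intro x
    have h1 : ‖M x‖ = ‖L (e.repr x)‖ := e.repr.symm.norm_map _
    rw [h1, ← e.repr.norm_map x]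
    exact hL _
  refine ⟨M.mkContinuous C hM, fun i x => ?_, M.mkContinuous_norm_le hC hM⟩
  rw [← e.repr_apply_apply, ← e.repr_apply_apply]
  change e.repr (e.repr.symm (L (e.repr x))) i = _
  rw [LinearIsometryEquiv.apply_symm_apply]
  rfl

theorem inner_basis (e : HilbertBasis ℕ ℂ H) (i j : ℕ) :
    ⟪e i, e j⟫_ℂ = if i = j then 1 else 0 :=
  orthonormal_iff_ite.mp e.orthonormal i j

theorem IsDiagonal.of_coord {e : HilbertBasis ℕ ℂ H} {D : H →L[ℂ] H} {a : ℕ → ℂ}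
    (h : ∀ i x, ⟪e i, D x⟫_ℂ = a i * ⟪e i, x⟫_ℂ) : IsDiagonal e D := by
  intro n m hnm
  rw [h, inner_basis, if_neg (Ne.symm hnm), mul_zero]

theorem IsDiagonal.apply_basis {e : HilbertBasis ℕ ℂ H} {D : H →L[ℂ] H} (h : IsDiagonal e D)
    (n : ℕ) : D (e n) = ⟪e n, D (e n)⟫_ℂ • e n := by
  refine e.ext_coord fun m => ?_
  rw [inner_smul_right, inner_basis]
  split_ifs with hm
  · rw [hm, mul_one]
  · rw [h n m (Ne.symm hm), mul_zero]

theorem IsDiagonal.commute {e : HilbertBasis ℕ ℂ H} {A B : H →L[ℂ] H} (hA : IsDiagonal e A)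
    (hB : IsDiagonal e B) : A * B = B * A := by
  refine ContinuousLinearMap.ext_on (s := Set.range e) ?_ ?_
  · rw [dense_iff_closure_eq, ← Submodule.topologicalClosure_coe, e.dense_span]
    rfl
  · rintro _ ⟨n, rfl⟩
    change A (B (e n)) = B (A (e n))
    rw [hA.apply_basis n, hB.apply_basis n, map_smul, map_smul, hA.apply_basis n,
      hB.apply_basis n]
    simp only [inner_smul_right, smul_smul, inner_basis, if_true, mul_one]
    rw [mul_comm]

/-- Composing a compact operator with projections onto far-out coordinates makes it small; stated
for the sesquilinear form so that no projection is needed. -/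
theorem exists_tail_bound_of_isCompact (e : HilbertBasis ℕ ℂ H) {C : H →L[ℂ] H}
    (hC : IsCompactOperator ⇑C) {η : ℝ} (hη : 0 < η) :
    ∃ n : ℕ, ∀ x y : H, (∀ i < n, ⟪e i, y⟫_ℂ = 0) → ‖⟪y, C x⟫_ℂ‖ ≤ η * ‖x‖ * ‖y‖ := by
  obtain ⟨K, hK, hCK⟩ := IsCompactOperator.image_closedBall_subset_compact (f := C.toLinearMap) hC 1
  obtain ⟨t, -, htf, htK⟩ := hK.finite_cover_balls (half_pos hη)
  have hev : ∀ᶠ n in Filter.atTop, ∀ z ∈ t,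
      ‖∑ i ∈ Finset.range n, e.repr z i • e i - z‖ < η / 2 := by
    rw [Filter.eventually_all_finite htf]
    intro z _
    have := (e.hasSum_repr z).tendsto_sum_nat
    filter_upwards [this.eventually (Metric.ball_mem_nhds z (half_pos hη))] with n hn
    rwa [← dist_eq_norm]
  obtain ⟨n, hn⟩ := hev.exists
  refine ⟨n, fun x y hy => ?_⟩
  have key : ∀ u : H, ‖u‖ ≤ 1 → ‖⟪y, C u⟫_ℂ‖ ≤ η * ‖y‖ := by
    intro u hu
    obtain ⟨z, hz, hCz⟩ : ∃ z ∈ t, C u ∈ Metric.ball z (η / 2) := by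
      simpa using htK (hCK ⟨u, by simpa using hu, rfl⟩)
    have h0 : ⟪y, ∑ i ∈ Finset.range n, e.repr z i • e i⟫_ℂ = 0 := by
      rw [inner_sum]
      refine Finset.sum_eq_zero fun i hi => ?_
      rw [inner_smul_right, inner_eq_zero_symm.mp (hy i (Finset.mem_range.mp hi)), mul_zero]
    have h1 : ⟪y, C u⟫_ℂ = ⟪y, (C u - z) - (∑ i ∈ Finset.range n, e.repr z i • e i - z)⟫_ℂ := by
      rw [sub_sub_sub_cancel_right, inner_sub_right, h0, sub_zero]
    rw [h1]
    refine (norm_inner_le_norm _ _).trans ?_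
    rw [mul_comm]
    gcongr
    refine (norm_sub_le _ _).trans ?_
    have := hn z hz
    rw [Metric.mem_ball, dist_eq_norm] at hCz
    linarith
  rcases eq_or_ne x 0 with rfl | hx
  · simp
  have hx' : ‖x‖ ≠ 0 := norm_ne_zero_iff.mpr hx
  have h2 := key (((‖x‖⁻¹ : ℝ) : ℂ) • x) (by
    rw [norm_smul, Complex.norm_real, norm_inv, norm_norm, inv_mul_cancel₀ hx'])
  rw [map_smul, inner_smul_right, norm_mul, Complex.norm_real, norm_inv, norm_norm,
    inv_mul_le_iff₀ (by positivity)] at h2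
  linarith

/-- The value `1` or `-1` of a sign encoded as a Boolean. -/
def boolSign (b : Bool) : ℂ := if b then 1 else -1

theorem boolSign_mul_self (b : Bool) : boolSign b * boolSign b = 1 := by
  cases b <;> simp [boolSign]

theorem norm_boolSign (b : Bool) : ‖boolSign b‖ = 1 := by
  cases b <;> simp [boolSign]

theorem star_boolSign (b : Bool) : (starRingEnd ℂ) (boolSign b) = boolSign b := by
  cases b <;> simp [boolSign]

theorem continuous_boolSign : Continuous boolSign := continuous_of_discreteTopology

/-- Orthogonality of two distinct Rademacher functions. -/
theorem sum_boolSign_mul_eq_zero (F : Finset ℕ) {i j : ℕ} (hi : i ∈ F) (hij : i ≠ j) :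
    ∑ s ∈ F.powerset, boolSign (decide (i ∈ s)) * boolSign (decide (j ∈ s)) = 0 := by
  refine Finset.sum_involution (fun s _ => if i ∈ s then s.erase i else insert i s) ?_ ?_ ?_ ?_
  · intro s _
    by_cases h : i ∈ s <;> by_cases h' : j ∈ s <;> simp [h, h', boolSign, hij.symm]
  · intro s _ _ h
    by_cases his : i ∈ s
    · rw [if_pos his] at h
      exact Finset.notMem_erase i s (by rwa [h])
    · rw [if_neg his] at h
      exact his (by rw [← h]; exact Finset.mem_insert_self i s)
  · intro s hs
    rw [Finset.mem_powerset] at hs ⊢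
    split_ifs
    · exact (Finset.erase_subset _ _).trans hs
    · exact Finset.insert_subset hi hs
  · intro s _
    by_cases h : i ∈ s <;> simp [h, Finset.insert_erase]

theorem sign_apply_basis {e : HilbertBasis ℕ ℂ H} {D : H →L[ℂ] H} {a : ℕ → ℂ}
    (h : ∀ i x, ⟪e i, D x⟫_ℂ = a i * ⟪e i, x⟫_ℂ) (n : ℕ) : D (e n) = a n • e n := by
  rw [(IsDiagonal.of_coord h).apply_basis n, h, inner_basis, if_pos rfl, mul_one]

theorem inner_sign_left {e : HilbertBasis ℕ ℂ H} {D : H →L[ℂ] H} {ε : ℕ → Bool}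
    (h : ∀ i x, ⟪e i, D x⟫_ℂ = boolSign (ε i) * ⟪e i, x⟫_ℂ) (x y : H) :
    ⟪D y, x⟫_ℂ = ⟪y, D x⟫_ℂ := by
  rw [← e.tsum_inner_mul_inner, ← e.tsum_inner_mul_inner]
  refine tsum_congr fun i => ?_
  rw [h, ← inner_conj_symm, h, map_mul, star_boolSign, inner_conj_symm]
  ring

theorem continuous_inner_sign {e : HilbertBasis ℕ ℂ H} {D : (ℕ → Bool) → H →L[ℂ] H}
    (h : ∀ ε i x, ⟪e i, D ε x⟫_ℂ = boolSign (ε i) * ⟪e i, x⟫_ℂ) (x y : H) :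
    Continuous fun ε => ⟪y, D ε x⟫_ℂ := by
  simp_rw [← e.tsum_inner_mul_inner y (D _ x), h]
  refine continuous_tsum (u := fun i => ‖⟪y, e i⟫_ℂ * ⟪e i, x⟫_ℂ‖) (fun i => ?_)
    (e.summable_inner_mul_inner y x).norm (fun i ε => ?_)
  · exact continuous_const.mul
      ((continuous_boolSign.comp (continuous_apply i)).mul continuous_const)
  · simp [norm_boolSign]

/-- If the commutators of `T` with all sign operators are compact, then by Baire's theorem on
`ℕ → Bool` they are uniformly small far out, for all signs in some cylinder set. -/
theorem exists_cylinder_bound (e : HilbertBasis ℕ ℂ H) (T : H →L[ℂ] H)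
    {D : (ℕ → Bool) → H →L[ℂ] H}
    (h : ∀ ε i x, ⟪e i, D ε x⟫_ℂ = boolSign (ε i) * ⟪e i, x⟫_ℂ)
    (hT : ∀ ε, IsCompactOperator ⇑(T * D ε - D ε * T)) {η : ℝ} (hη : 0 < η) :
    ∃ (J : Finset ℕ) (ε₀ : ℕ → Bool), ∀ ε, (∀ i ∈ J, ε i = ε₀ i) → ∀ x y : H,
      (∀ i ∈ J, ⟪e i, y⟫_ℂ = 0) → ‖⟪y, (T * D ε - D ε * T) x⟫_ℂ‖ ≤ η * ‖x‖ * ‖y‖ := by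
  let E : ℕ → Set (ℕ → Bool) := fun n => {ε | ∀ x y : H, (∀ i < n, ⟪e i, y⟫_ℂ = 0) →
    ‖⟪y, (T * D ε - D ε * T) x⟫_ℂ‖ ≤ η * ‖x‖ * ‖y‖}
  have hcl : ∀ n, IsClosed (E n) := by
    intro n
    simp only [E, Set.ofPred_forall]
    refine isClosed_iInter fun x => isClosed_iInter fun y => isClosed_iInter fun _ =>
      isClosed_le (Continuous.norm ?_) continuous_const
    have : (fun ε => ⟪y, (T * D ε - D ε * T) x⟫_ℂ) =
        fun ε => ⟪adjoint T y, D ε x⟫_ℂ - ⟪y, D ε (T x)⟫_ℂ := by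
      funext ε
      rw [adjoint_inner_left, ← inner_sub_right]
      rfl
    rw [this]
    exact (continuous_inner_sign h _ _).sub (continuous_inner_sign h _ _)
  have hun : ⋃ n, E n = Set.univ := Set.eq_univ_of_forall fun ε =>
    Set.mem_iUnion.mpr (exists_tail_bound_of_isCompact e (hT ε) hη)
  obtain ⟨n, ε₀, hε₀⟩ := nonempty_interior_of_iUnion_of_closed hcl hun
  obtain ⟨I, u, hu, hIu⟩ := isOpen_pi_iff.mp isOpen_interior ε₀ hε₀
  refine ⟨I ∪ Finset.range n, ε₀, fun ε hε x y hy => ?_⟩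
  have hmem : ε ∈ E n := interior_subset (hIu fun i hi => by
    rw [hε i (Finset.mem_union_left _ hi)]
    exact (hu i hi).2)
  exact hmem x y fun i hi => hy i (Finset.mem_union_right _ (Finset.mem_range.mpr hi))

/-- For finitely supported vectors, averaging `D ε * T * D ε` over the signs of the coordinates in
the support annihilates an operator `T` with zero diagonal, so that `T` is controlled by its
commutators with the sign operators. -/
theorem norm_inner_le_of_cylinder_bound (e : HilbertBasis ℕ ℂ H) (T : H →L[ℂ] H)
    (hT0 : ∀ i, ⟪e i, T (e i)⟫_ℂ = 0) {D : (ℕ → Bool) → H →L[ℂ] H}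
    (h : ∀ ε i x, ⟪e i, D ε x⟫_ℂ = boolSign (ε i) * ⟪e i, x⟫_ℂ) (hD : ∀ ε, ‖D ε‖ ≤ 1)
    {η : ℝ} (hη : 0 < η) {J : Finset ℕ} {ε₀ : ℕ → Bool}
    (hJ : ∀ ε, (∀ i ∈ J, ε i = ε₀ i) → ∀ x y : H,
      (∀ i ∈ J, ⟪e i, y⟫_ℂ = 0) → ‖⟪y, (T * D ε - D ε * T) x⟫_ℂ‖ ≤ η * ‖x‖ * ‖y‖)
    (F : Finset ℕ) (hF : Disjoint F J) (a b : ℕ → ℂ) :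
    ‖⟪∑ i ∈ F, b i • e i, T (∑ i ∈ F, a i • e i)⟫_ℂ‖ ≤
      η * ‖∑ i ∈ F, a i • e i‖ * ‖∑ i ∈ F, b i • e i‖ := by
  set x := ∑ i ∈ F, a i • e i with hx
  set y := ∑ i ∈ F, b i • e i with hy
  -- Sign patterns in the cylinder, indexed by the subset of `F` where the sign is `1`.
  let σ : Finset ℕ → ℕ → Bool := fun s i => if i ∈ F then decide (i ∈ s) else ε₀ i
  have hyJ : ∀ i ∈ J, ⟪e i, y⟫_ℂ = 0 := by
    intro i hi
    rw [hy, inner_sum]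
    refine Finset.sum_eq_zero fun j hj => ?_
    rw [inner_smul_right, inner_basis, if_neg, mul_zero]
    rintro rfl
    exact Finset.disjoint_left.mp hF hj hi
  have hDD : ∀ ε z, D ε (D ε z) = z := fun ε z => e.ext_coord fun i => by
    rw [h, h, ← mul_assoc, boolSign_mul_self, one_mul]
  have hterm : ∀ s, ‖⟪D (σ s) y, T (D (σ s) x)⟫_ℂ - ⟪y, T x⟫_ℂ‖ ≤ η * ‖x‖ * ‖y‖ := by
    intro s
    have h1 := hJ (σ s) (fun i hi => if_neg (Finset.disjoint_right.mp hF hi)) x (D (σ s) y)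
      (fun i hi => by rw [h, hyJ i hi, mul_zero])
    have h2 : ⟪D (σ s) y, (T * D (σ s) - D (σ s) * T) x⟫_ℂ =
        ⟪D (σ s) y, T (D (σ s) x)⟫_ℂ - ⟪y, T x⟫_ℂ := by
      change ⟪D (σ s) y, T (D (σ s) x) - D (σ s) (T x)⟫_ℂ = _
      rw [inner_sub_right, ← inner_sign_left (h _) (T x), hDD]
    rw [h2] at h1
    refine h1.trans ?_
    gcongr
    simpa using (D (σ s)).le_of_opNorm_le (hD _) y
  have hDsum : ∀ s (c : ℕ → ℂ), D (σ s) (∑ i ∈ F, c i • e i) =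
      ∑ i ∈ F, (c i * boolSign (decide (i ∈ s))) • e i := by
    intro s c
    rw [map_sum]
    refine Finset.sum_congr rfl fun i hi => ?_
    rw [map_smul, sign_apply_basis (h _), smul_smul]
    simp only [σ, if_pos hi]
  have havg : ∑ s ∈ F.powerset, ⟪D (σ s) y, T (D (σ s) x)⟫_ℂ = 0 := by
    have hexp : ∀ s, ⟪D (σ s) y, T (D (σ s) x)⟫_ℂ = ∑ i ∈ F, ∑ j ∈ F,
        (boolSign (decide (i ∈ s)) * boolSign (decide (j ∈ s))) *
          ((starRingEnd ℂ) (b i) * a j * ⟪e i, T (e j)⟫_ℂ) := by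
      intro s
      rw [hx, hy, hDsum, hDsum, map_sum, sum_inner]
      refine Finset.sum_congr rfl fun i _ => ?_
      rw [inner_sum]
      refine Finset.sum_congr rfl fun j _ => ?_
      rw [map_smul, inner_smul_left, inner_smul_right, map_mul, star_boolSign]
      ring
    simp_rw [hexp]
    rw [Finset.sum_comm]
    refine Finset.sum_eq_zero fun i hi => ?_
    rw [Finset.sum_comm]
    refine Finset.sum_eq_zero fun j _ => ?_
    rw [← Finset.sum_mul]
    rcases eq_or_ne i j with rfl | hij
    · rw [hT0, mul_zero, mul_zero]
    · rw [sum_boolSign_mul_eq_zero F hi hij, zero_mul]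
  have hsum := norm_sum_le_of_le F.powerset fun s _ => hterm s
  rw [Finset.sum_sub_distrib, havg, zero_sub, norm_neg, Finset.sum_const, Finset.sum_const,
    nsmul_eq_mul, nsmul_eq_mul, norm_mul, Complex.norm_natCast] at hsum
  exact le_of_mul_le_mul_left hsum (by simp)

/-- A zero-diagonal operator whose commutators with all sign operators are compact is, as a
sesquilinear form, arbitrarily small on the complement of finitely many coordinates. -/
theorem exists_finset_bound (e : HilbertBasis ℕ ℂ H) (T : H →L[ℂ] H)
    (hT0 : ∀ i, ⟪e i, T (e i)⟫_ℂ = 0)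
    (hT : ∀ D : H →L[ℂ] H, IsDiagonal e D → IsCompactOperator ⇑(T * D - D * T))
    {η : ℝ} (hη : 0 < η) :
    ∃ J : Finset ℕ, ∀ x y : H, (∀ i ∈ J, ⟪e i, x⟫_ℂ = 0) → (∀ i ∈ J, ⟪e i, y⟫_ℂ = 0) →
      ‖⟪y, T x⟫_ℂ‖ ≤ η * ‖x‖ * ‖y‖ := by
  choose D h hD using fun ε : ℕ → Bool =>
    exists_diagonal_of_bounded e (fun i => boolSign (ε i)) 1 (fun i => (norm_boolSign _).le)
  obtain ⟨J, ε₀, hJ⟩ :=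
    exists_cylinder_bound e T h (fun ε => hT _ (IsDiagonal.of_coord (h ε))) hη
  refine ⟨J, fun x y hx hy => ?_⟩
  have hsd : ∀ z : H, (∀ i ∈ J, ⟪e i, z⟫_ℂ = 0) → ∀ F : Finset ℕ,
      ∑ i ∈ F \ J, e.repr z i • e i = ∑ i ∈ F, e.repr z i • e i := by
    intro z hz F
    refine Finset.sum_subset Finset.sdiff_subset fun i hi hi' => ?_
    rw [e.repr_apply_apply, hz i, zero_smul]
    by_contra hc
    exact hi' (Finset.mem_sdiff.mpr ⟨hi, hc⟩)
  have hxs : Filter.Tendsto (fun F : Finset ℕ => ∑ i ∈ F, e.repr x i • e i) Filter.atTop (nhds x) :=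
    e.hasSum_repr x
  have hys : Filter.Tendsto (fun F : Finset ℕ => ∑ i ∈ F, e.repr y i • e i) Filter.atTop (nhds y) :=
    e.hasSum_repr y
  refine le_of_tendsto_of_tendsto' (hys.inner ((T.continuous.tendsto x).comp hxs)).norm
    ((hxs.norm.const_mul η).mul hys.norm) fun F => ?_
  have := norm_inner_le_of_cylinder_bound e T hT0 h hD hη hJ (F \ J) Finset.sdiff_disjoint
    (fun i => e.repr x i) (fun i => e.repr y i)
  rwa [hsd x hx, hsd y hy] at this

theorem isCompactOperator_of_zero_diagonal (e : HilbertBasis ℕ ℂ H) (T : H →L[ℂ] H)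
    (hT0 : ∀ i, ⟪e i, T (e i)⟫_ℂ = 0)
    (hT : ∀ D : H →L[ℂ] H, IsDiagonal e D → IsCompactOperator ⇑(T * D - D * T)) :
    IsCompactOperator ⇑T := by
  have hclosed : IsClosed {A : H →L[ℂ] H | IsCompactOperator ⇑A} :=
    isClosed_setOfPred_isCompactOperator
  refine hclosed.closure_subset (Metric.mem_closure_iff.mpr fun δ hδ => ?_)
  obtain ⟨J, hJ⟩ := exists_finset_bound e T hT0 hT (half_pos hδ)
  let V : Submodule ℂ H := Submodule.span ℂ (e '' J)
  have : FiniteDimensional ℂ V := FiniteDimensional.span_of_finite ℂ (J.finite_toSet.image e)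
  let P : H →L[ℂ] H := V.starProjection
  let Q : H →L[ℂ] H := Vᗮ.starProjection
  have hPQ : ∀ x, P x + Q x = x := fun x => V.starProjection_add_starProjection_orthogonal x
  have hP : IsCompactOperator ⇑P :=
    by
    have : ProperSpace V := FiniteDimensional.proper ℂ V
    exact (isCompactOperator_of_locallyCompactSpace_rng V.subtypeL).comp_clm
      V.orthogonalProjectionOnto
  have hQ : ∀ x, ∀ i ∈ J, ⟪e i, Q x⟫_ℂ = 0 := fun x i hi =>
    Submodule.inner_right_of_mem_orthogonal (K := V)
      (Submodule.subset_span (Set.mem_image_of_mem e hi))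
      (Submodule.starProjection_apply_mem _ x)
  have hQn : ∀ x, ‖Q x‖ ≤ ‖x‖ := fun x => by
    simpa using Q.le_of_opNorm_le Vᗮ.starProjection_norm_le x
  have hmem : IsCompactOperator ⇑(P * T + Q * T * P) :=
    (hP.comp_clm T).add (hP.clm_comp (Q * T))
  refine ⟨P * T + Q * T * P, hmem, ?_⟩
  have hdiff : T - (P * T + Q * T * P) = Q * T * Q := by
    ext x
    have h1 := hPQ (T x)
    have h2 : Q (T x) = Q (T (P x)) + Q (T (Q x)) := by rw [← map_add, ← map_add, hPQ]
    change T x - (P (T x) + Q (T (P x))) = Q (T (Q x))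
    rw [← sub_sub, ← add_sub_cancel_left (Q (T (P x))) (Q (T (Q x))), ← h2]
    nth_rewrite 1 [← h1]
    rw [add_sub_cancel_left]
  rw [dist_eq_norm, hdiff]
  refine (opNorm_le_bound _ (half_pos hδ).le fun x => ?_).trans_lt (half_lt_self hδ)
  set z := (Q * T * Q) x with hz
  have h1 : ‖z‖ * ‖z‖ ≤ δ / 2 * ‖x‖ * ‖z‖ := by
    have h2 : ⟪z, z⟫_ℂ = ⟪Q z, T (Q x)⟫_ℂ := by
      nth_rewrite 2 [hz]
      exact (Vᗮ.inner_starProjection_left_eq_right z (T (Q x))).symm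
    have h3 : ‖z‖ * ‖z‖ = ‖⟪Q z, T (Q x)⟫_ℂ‖ := by
      rw [← h2, inner_self_eq_norm_sq_to_K]
      simp [pow_two]
    rw [h3]
    refine (hJ (Q x) (Q z) (hQ x) (hQ z)).trans ?_
    gcongr
    · exact hQn x
    · exact hQn z
  rcases (norm_nonneg z).eq_or_lt with h0 | h0
  · rw [← h0]; positivity
  · exact le_of_mul_le_mul_right h1 h0

/-- `S ∈ D+K` if and only if the commutator `[S, D]` is compact for every diagonal operator. -/
theorem mem_DplusK_iff_commutator_compact (e : HilbertBasis ℕ ℂ H) (S : H →L[ℂ] H) :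
    S ∈ DplusK e ↔ ∀ D : H →L[ℂ] H, IsDiagonal e D → IsCompactOperator ⇑(S * D - D * S) := by
  constructor
  · rintro ⟨D₀, K, hD₀, hK, rfl⟩ D hD
    have h : (D₀ + K) * D - D * (D₀ + K) = K * D - D * K := by
      rw [add_mul, mul_add, hD₀.commute hD, add_sub_add_left_eq_sub]
    rw [h]
    exact (hK.comp_clm D).sub (hK.clm_comp D)
  · intro hS
    obtain ⟨D₀, h, -⟩ := exists_diagonal_of_bounded e (fun i => ⟪e i, S (e i)⟫_ℂ) ‖S‖ fun i => by
      have h1 := (norm_inner_le_norm (𝕜 := ℂ) (e i) (S (e i))).trans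
        (mul_le_mul_of_nonneg_left (S.le_opNorm (e i)) (norm_nonneg _))
      simpa [e.orthonormal.1 i] using h1
    have hD₀ : IsDiagonal e D₀ := IsDiagonal.of_coord h
    refine ⟨D₀, S - D₀, hD₀, isCompactOperator_of_zero_diagonal e _ (fun i => ?_) ?_, by abel⟩
    · rw [sub_apply, inner_sub_right, h, inner_basis, if_pos rfl, mul_one, sub_self]
    · intro D hD
      have h2 : (S - D₀) * D - D * (S - D₀) = S * D - D * S := by
        rw [sub_mul, mul_sub, hD₀.commute hD, sub_sub_sub_cancel_right]
      rw [h2]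
      exact hS D hD
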